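/- arXiv:2109.12233 — 2 statements merged into one kernel-verified Lean document; each statement's English description precedes it below -/
import Mathlib

section
/- Let k be a finite field of odd characteristic. Then the Grothendieck-Witt group of k (the group completion of the monoid of isometry classes of nondegenerate symmetric bilinear forms over k under orthogonal sum) is isomorphic as a ring to Z[e]/(e², 2e), where e = [r] − [1] for r a non-square in k×. -/
open Polynomial Matrix Kronecker

/-- The ring `ℤ[e]/(e², 2e)`. -/
noncomputable def RepsInt : Ideal (Polynomial ℤ) :=
  Ideal.span ({X ^ 2, 2 * X} : Set (Polynomial ℤ))

abbrev GWTarget := Polynomial ℤ ⧸ RepsInt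

/-- The class of `e` in `ℤ[e]/(e², 2e)`. -/
noncomputable def ebar : GWTarget := Ideal.Quotient.mk RepsInt X

/-- Congruence (isometry of the associated bilinear forms) of square matrices of
possibly different (but then necessarily equal) sizes. -/
def MCongruent {k : Type*} [Field k] {n m : ℕ}
    (A : Matrix (Fin n) (Fin n) k) (B : Matrix (Fin m) (Fin m) k) : Prop :=
  ∃ e : Fin n ≃ Fin m, ∃ P : Matrix (Fin m) (Fin m) k,
    IsUnit P.det ∧ Matrix.reindex e e A = Pᵀ * B * P

/-- Orthogonal direct sum of forms: block sum of Gram matrices. -/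
def blockSum {k : Type*} [Field k] {n m : ℕ}
    (A : Matrix (Fin n) (Fin n) k) (B : Matrix (Fin m) (Fin m) k) :
    Matrix (Fin (n + m)) (Fin (n + m)) k :=
  Matrix.reindex finSumFinEquiv finSumFinEquiv (Matrix.fromBlocks A 0 0 B)

/-- Tensor product of forms: Kronecker product of Gram matrices. -/
def matKron {k : Type*} [Field k] {n m : ℕ}
    (A : Matrix (Fin n) (Fin n) k) (B : Matrix (Fin m) (Fin m) k) :
    Matrix (Fin (n * m)) (Fin (n * m)) k :=
  Matrix.reindex finProdFinEquiv finProdFinEquiv (A ⊗ₖ B)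

section Congruence

variable {k : Type*} [Field k]

theorem MCongruent.size_eq {n m : ℕ} {A : Matrix (Fin n) (Fin n) k}
    {B : Matrix (Fin m) (Fin m) k} (h : MCongruent A B) : n = m := by
  obtain ⟨e, -⟩ := h
  simpa using Fintype.card_congr e

theorem MCongruent.exists_det_eq {n m : ℕ} {A : Matrix (Fin n) (Fin n) k}
    {B : Matrix (Fin m) (Fin m) k} (h : MCongruent A B) : ∃ s : k, A.det = s * s * B.det := by
  obtain ⟨e, P, -, h⟩ := h
  refine ⟨P.det, ?_⟩
  rw [← det_reindex_self e A, h, det_mul, det_mul, det_transpose]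
  ring

theorem mCongruent_of_eq {n : ℕ} {A B P : Matrix (Fin n) (Fin n) k} (hP : IsUnit P.det)
    (h : A = Pᵀ * B * P) : MCongruent A B :=
  ⟨Equiv.refl _, P, hP, by simpa using h⟩

theorem det_blockSum {n m : ℕ} (A : Matrix (Fin n) (Fin n) k) (B : Matrix (Fin m) (Fin m) k) :
    (blockSum A B).det = A.det * B.det := by
  rw [blockSum, det_reindex_self, det_fromBlocks_zero₂₁]

theorem blockSum_diagonal_castSucc {n : ℕ} (d : Fin (n + 1) → k) :
    blockSum (diagonal fun i : Fin n => d i.castSucc) !![d (Fin.last n)] = diagonal d := by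
  have h : Matrix.fromBlocks (diagonal fun i : Fin n => d i.castSucc) 0 0 !![d (Fin.last n)] =
      diagonal (d ∘ finSumFinEquiv (m := n) (n := 1)) := by
    have h1 : !![d (Fin.last n)] = diagonal fun i : Fin 1 => d (Fin.natAdd n i) := by
      ext i j
      fin_cases i; fin_cases j
      rfl
    rw [h1, fromBlocks_diagonal]
    congr 1
    ext i
    rcases i with i | i
    · simp
      rfl
    · simp
  rw [blockSum, h]
  ext i j
  simp [diagonal_apply]

theorem matKron_singleton (a b : k) : matKron !![a] !![b] = !![a * b] := by
  ext i j
  fin_cases i; fin_cases j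
  rfl

theorem mCongruent_singleton (a : k) {s : k} (hs : s ≠ 0) :
    MCongruent !![a * (s * s)] !![a] := by
  refine mCongruent_of_eq (P := !![s]) (by simpa using hs) ?_
  ext i j
  fin_cases i; fin_cases j
  simp [Matrix.mul_apply]
  ring

theorem Matrix.IsSymm.exists_mCongruent_diagonal (h2 : (2 : k) ≠ 0) {n : ℕ}
    {A : Matrix (Fin n) (Fin n) k} (hA : A.IsSymm) (hdet : IsUnit A.det) :
    ∃ d : Fin n → k, (∀ i, d i ≠ 0) ∧ MCongruent (diagonal d) A := by
  have : Invertible (2 : k) := invertibleOfNonzero h2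
  obtain ⟨v', hv'⟩ := LinearMap.BilinForm.exists_orthogonal_basis (B := A.toBilin')
    (LinearMap.BilinForm.isSymm_iff.mp (Matrix.isSymm_toBilin'_iff_isSymm.mpr hA))
  let v := v'.reindex (finCongr (Module.finrank_fin_fun k (n := n)))
  let P := (Pi.basisFun k (Fin n)).toMatrix v
  have hP : IsUnit P.det := by
    rw [← isUnit_iff_isUnit_det]
    exact IsUnit.of_mul_eq_one _ ((Pi.basisFun k (Fin n)).toMatrix_mul_toMatrix_flip v)
  have hdiag : diagonal (fun i => A.toBilin' (v i) (v i)) = Pᵀ * A * P := by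
    have h := LinearMap.BilinForm.toMatrix_mul_basis_toMatrix (Pi.basisFun k (Fin n)) v A.toBilin'
    rw [LinearMap.BilinForm.toMatrix_basisFun, LinearMap.BilinForm.toMatrix'_toBilin'] at h
    rw [h]
    ext i j
    rw [LinearMap.BilinForm.toMatrix_apply, diagonal_apply]
    split_ifs with hij
    · rw [hij]
    · simp only [v, Module.Basis.reindex_apply]
      exact (LinearMap.isOrthoᵢ_def.mp hv' _ _ ((Equiv.injective _).ne hij)).symm
  refine ⟨_, fun i => ?_, mCongruent_of_eq hP hdiag⟩
  have hne : (diagonal fun i => A.toBilin' (v i) (v i)).det ≠ 0 := by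
    rw [hdiag, det_mul, det_mul, det_transpose]
    exact ((hP.mul hdet).mul hP).ne_zero
  rw [det_diagonal, Finset.prod_ne_zero_iff] at hne
  exact hne i (Finset.mem_univ i)

end Congruence

section FiniteField

variable {k : Type*} [Field k] [Fintype k]

theorem FiniteField.exists_sq_add_sq_eq (hchar : ringChar k ≠ 2) (r : k) :
    ∃ a b : k, a ^ 2 + b ^ 2 = r := by
  obtain ⟨a, b, hab⟩ := FiniteField.exists_root_sum_quadratic (f := (X ^ 2 : k[X]))
    (g := X ^ 2 - C r) (degree_X_pow 2) (degree_X_pow_sub_C (by decide) _)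
    (FiniteField.odd_card_of_char_ne_two hchar)
  refine ⟨a, b, ?_⟩
  rw [← sub_eq_zero]
  simpa only [eval_C, eval_X, eval_pow, eval_sub, ← add_sub_assoc] using hab

theorem FiniteField.exists_eq_mul_mul_self_of_not_isSquare {r s : k} (hr : ¬ IsSquare r)
    (hs : ¬ IsSquare s) : ∃ t : k, t ≠ 0 ∧ r = s * (t * t) := by
  classical
  have hr0 : r ≠ 0 := fun h => hr (h ▸ IsSquare.zero)
  have hs0 : s ≠ 0 := fun h => hs (h ▸ IsSquare.zero)
  have h : IsSquare (r * s) := by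
    rw [← quadraticChar_one_iff_isSquare (mul_ne_zero hr0 hs0), map_mul,
      quadraticChar_neg_one_iff_not_isSquare.mpr hr,
      quadraticChar_neg_one_iff_not_isSquare.mpr hs]
    norm_num
  obtain ⟨t, ht⟩ := h
  have ht0 : t ≠ 0 := by
    rintro rfl
    simp [hr0, hs0] at ht
  refine ⟨t / s, div_ne_zero ht0 hs0, ?_⟩
  field_simp
  rw [sq, ← ht]

theorem mCongruent_diagonal_const_two (hchar : ringChar k ≠ 2) {r : k} (hr : r ≠ 0) :
    MCongruent (diagonal fun _ : Fin 2 => r) (diagonal fun _ : Fin 2 => (1 : k)) := by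
  obtain ⟨a, b, rfl⟩ := FiniteField.exists_sq_add_sq_eq hchar r
  refine mCongruent_of_eq (P := !![a, b; -b, a]) ?_ ?_
  · rw [det_fin_two_of]
    exact IsUnit.mk0 _ (by convert hr using 1; ring)
  · ext i j
    fin_cases i <;> fin_cases j <;> simp [Matrix.mul_apply, Fin.sum_univ_two] <;> ring

end FiniteField

section Class

variable {k : Type*} [Field k] {G : Type*} [CommRing G]

theorem class_diagonal (c : ∀ {n : ℕ}, Matrix (Fin n) (Fin n) k → G)
    (hadd : ∀ {n m : ℕ} (A : Matrix (Fin n) (Fin n) k) (B : Matrix (Fin m) (Fin m) k),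
      c (blockSum A B) = c A + c B) {n : ℕ} (d : Fin n → k) :
    c (diagonal d) = ∑ i, c !![d i] := by
  induction n with
  | zero =>
    have h := hadd (diagonal d) (diagonal d)
    have h0 : blockSum (diagonal d) (diagonal d) = diagonal d := by
      ext i
      exact i.elim0
    rw [h0] at h
    simpa using h
  | succ n ih =>
    rw [← blockSum_diagonal_castSucc, hadd, ih, Fin.sum_univ_castSucc]

end Class

theorem GWTarget.exists_eq_intCast_add_intCast_mul_ebar (x : GWTarget) :
    ∃ a b : ℤ, (b = 0 ∨ b = 1) ∧ x = a + b * ebar := by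
  have hsq : ebar * ebar = 0 := by
    rw [ebar, ← map_mul, Ideal.Quotient.eq_zero_iff_mem, ← sq]
    exact Ideal.subset_span (by simp)
  have htwo : (2 : GWTarget) * ebar = 0 := by
    have : (2 : GWTarget) = Ideal.Quotient.mk RepsInt 2 := (map_ofNat _ 2).symm
    rw [this, ebar, ← map_mul, Ideal.Quotient.eq_zero_iff_mem]
    exact Ideal.subset_span (by simp)
  obtain ⟨p, rfl⟩ := Ideal.Quotient.mk_surjective x
  have hlin : ∃ a b : ℤ, Ideal.Quotient.mk RepsInt p = a + b * ebar := by
    induction p using Polynomial.induction_on with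
    | C a => exact ⟨a, 0, by simp⟩
    | add p q hp hq =>
      obtain ⟨a, b, h⟩ := hp
      obtain ⟨a', b', h'⟩ := hq
      refine ⟨a + a', b + b', ?_⟩
      rw [map_add, h, h']
      push_cast
      ring
    | monomial n a h =>
      obtain ⟨a', b', h⟩ := h
      refine ⟨0, a', ?_⟩
      rw [pow_succ, ← mul_assoc, map_mul, h, ← ebar]
      push_cast
      linear_combination (b' : GWTarget) * hsq
  obtain ⟨a, b, h⟩ := hlin
  refine ⟨a, b % 2, Int.emod_two_eq_zero_or_one b, ?_⟩
  have hb : (b : GWTarget) = 2 * ((b / 2 : ℤ) : GWTarget) + ((b % 2 : ℤ) : GWTarget) := by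
    exact_mod_cast congrArg (Int.cast (R := GWTarget)) (Int.mul_ediv_add_emod b 2).symm
  rw [h, hb]
  linear_combination ((b / 2 : ℤ) : GWTarget) * htwo

/-- Let `k` be a finite field of odd characteristic.  The Grothendieck–Witt ring of `k`
— i.e. any commutative ring `G` receiving the isometry classes of nondegenerate
symmetric bilinear forms (Gram matrices) over `k`, additively via orthogonal sum and
multiplicatively via tensor product, which is the group completion of the monoid of
isometry classes (every element is a difference of classes, and classes become equal in
`G` only when stably isometric) — is isomorphic as a ring to `ℤ[e]/(e², 2e)`, via an
isomorphism sending `[r] − [1]` to `e` for `r` a non-square in `kˣ`. -/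
theorem stmt0 {k : Type*} [Field k] [Fintype k] (hchar : ringChar k ≠ 2)
    (G : Type*) [CommRing G]
    (c : ∀ {n : ℕ}, Matrix (Fin n) (Fin n) k → G)
    (hcong : ∀ {n m : ℕ} (A : Matrix (Fin n) (Fin n) k) (B : Matrix (Fin m) (Fin m) k),
      MCongruent A B → c A = c B)
    (hadd : ∀ {n m : ℕ} (A : Matrix (Fin n) (Fin n) k) (B : Matrix (Fin m) (Fin m) k),
      c (blockSum A B) = c A + c B)
    (hmul : ∀ {n m : ℕ} (A : Matrix (Fin n) (Fin n) k) (B : Matrix (Fin m) (Fin m) k),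
      c (matKron A B) = c A * c B)
    (hone : c (1 : Matrix (Fin 1) (Fin 1) k) = 1)
    (hsurj : ∀ g : G, ∃ (n m : ℕ) (A : Matrix (Fin n) (Fin n) k)
      (B : Matrix (Fin m) (Fin m) k),
      A.IsSymm ∧ IsUnit A.det ∧ B.IsSymm ∧ IsUnit B.det ∧ g = c A - c B)
    (hfaith : ∀ {n m : ℕ} (A : Matrix (Fin n) (Fin n) k) (B : Matrix (Fin m) (Fin m) k),
      A.IsSymm → IsUnit A.det → B.IsSymm → IsUnit B.det → c A = c B →
      ∃ (l : ℕ) (D : Matrix (Fin l) (Fin l) k), D.IsSymm ∧ IsUnit D.det ∧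
        MCongruent (blockSum A D) (blockSum B D)) :
    ∃ φ : G ≃+* GWTarget,
      ∀ r : k, ¬ IsSquare r → φ (c !![r] - c !![(1 : k)]) = ebar := by
  have h2 : (2 : k) ≠ 0 := Ring.two_ne_zero hchar
  have hone' : c !![(1 : k)] = 1 := by
    rw [← hone]
    congr 1
    ext i j
    fin_cases i; fin_cases j
    rfl
  have hdiag {n : ℕ} (d : Fin n → k) : c (diagonal d) = ∑ i, c !![d i] :=
    class_diagonal c hadd d
  have hcone (n : ℕ) : c (1 : Matrix (Fin n) (Fin n) k) = n := by
    rw [← diagonal_one, hdiag]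
    simp [hone']
  obtain ⟨r, hr⟩ := FiniteField.exists_nonsquare hchar
  have hr0 : r ≠ 0 := fun h => hr (h ▸ IsSquare.zero)
  have hsquare (a : k) {s : k} (hs : s ≠ 0) : c !![a * (s * s)] = c !![a] :=
    hcong _ _ (mCongruent_singleton a hs)
  have hnonsq {s : k} (hs : ¬ IsSquare s) : c !![s] = c !![r] := by
    obtain ⟨t, ht, rfl⟩ := FiniteField.exists_eq_mul_mul_self_of_not_isSquare hs hr
    exact hsquare r ht
  have htwo : 2 * (c !![r] - 1) = 0 := by
    have h := hcong _ _ (mCongruent_diagonal_const_two hchar hr0)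
    rw [hdiag, hdiag] at h
    simp only [Fin.sum_univ_two, hone'] at h
    linear_combination h
  have hsq : (c !![r] - 1) ^ 2 = 0 := by
    have h := hmul !![r] !![r]
    have h1 := hsquare 1 hr0
    rw [one_mul, hone'] at h1
    rw [matKron_singleton, h1] at h
    linear_combination -h - htwo
  let ψ : GWTarget →+* G :=
    Ideal.Quotient.lift RepsInt (aeval (R := ℤ) (c !![r] - 1)).toRingHom (by
      intro p hp
      have hle : RepsInt ≤ RingHom.ker (aeval (R := ℤ) (c !![r] - 1)).toRingHom := by
        rw [RepsInt, Ideal.span_le]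
        rintro q (rfl | rfl)
        · simpa [RingHom.mem_ker] using hsq
        · simpa [RingHom.mem_ker, map_ofNat (aeval (R := ℤ) (c !![r] - 1)) 2] using htwo
      exact hle hp)
  have hψe : ψ ebar = c !![r] - 1 := by
    simp [ψ, ebar]
  have hsingle {a : k} (ha : a ≠ 0) : c !![a] ∈ ψ.range := by
    by_cases hs : IsSquare a
    · obtain ⟨s, rfl⟩ := hs
      have h1 := hsquare 1 (left_ne_zero_of_mul ha)
      rw [one_mul, hone'] at h1
      rw [h1]
      exact one_mem _
    · rw [hnonsq hs]
      exact ⟨ebar + 1, by rw [map_add, hψe, map_one, sub_add_cancel]⟩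
  have hclass {n : ℕ} {A : Matrix (Fin n) (Fin n) k} (hA : A.IsSymm) (hdet : IsUnit A.det) :
      c A ∈ ψ.range := by
    obtain ⟨d, hd, h⟩ := hA.exists_mCongruent_diagonal h2 hdet
    rw [← hcong _ _ h, hdiag]
    exact sum_mem fun i _ => hsingle (hd i)
  have hψsurj : Function.Surjective ψ := by
    intro g
    obtain ⟨n, m, A, B, hA, hA', hB, hB', rfl⟩ := hsurj g
    exact sub_mem (hclass hA hA') (hclass hB hB')
  have hrank_det {n m : ℕ} (s : k) (hs : s ≠ 0) (h : (n : G) + c !![s] = m + 1) :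
      n = m ∧ IsSquare s := by
    let A : Matrix (Fin (n + 1)) (Fin (n + 1)) k :=
      diagonal (Fin.snoc (fun _ : Fin n => (1 : k)) s)
    have hAdet : A.det = s := by
      simp [A, Fin.prod_univ_castSucc]
    have hcA : c A = c (1 : Matrix (Fin (m + 1)) (Fin (m + 1)) k) := by
      rw [hcone, hdiag, Fin.sum_univ_castSucc]
      simpa [hone'] using h
    obtain ⟨l, D, -, hD, hAD⟩ := hfaith A 1 (isSymm_diagonal _)
      (by rw [hAdet]; exact IsUnit.mk0 s hs) isSymm_one (by simp) hcA
    refine ⟨by have := hAD.size_eq; omega, ?_⟩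
    obtain ⟨t, ht⟩ := hAD.exists_det_eq
    rw [det_blockSum, det_blockSum, hAdet, det_one, one_mul] at ht
    exact ⟨t, hD.mul_right_cancel ht⟩
  have hψinj : Function.Injective ψ := by
    rw [injective_iff_map_eq_zero]
    intro x hx
    obtain ⟨a, b, hb, rfl⟩ := GWTarget.exists_eq_intCast_add_intCast_mul_ebar x
    have ha : (a.toNat : ℤ) - ((-a).toNat : ℤ) = a := by omega
    have haG : ((a.toNat : ℕ) : G) - (((-a).toNat : ℕ) : G) = (a : G) := by
      exact_mod_cast congrArg (Int.cast (R := G)) ha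
    rw [map_add, map_mul, map_intCast, map_intCast, hψe] at hx
    rcases hb with rfl | rfl
    · have h := (hrank_det (n := a.toNat) (m := (-a).toNat) 1 one_ne_zero (by
        rw [hone']
        push_cast at hx
        linear_combination hx + haG)).1
      have : a = 0 := by omega
      simp [this]
    · refine absurd (hrank_det (n := a.toNat) (m := (-a).toNat) r hr0 ?_).2 hr
      push_cast at hx
      linear_combination hx + haG
  let φ := RingEquiv.ofBijective ψ ⟨hψinj, hψsurj⟩
  refine ⟨φ.symm, fun s hs => ?_⟩
  rw [RingEquiv.symm_apply_eq, hnonsq hs, hone']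
  exact hψe.symm
end

section
/- Over a finite field k of odd characteristic, every nondegenerate symmetric bilinear form is determined up to isometry by its rank and its determinant class in k×/(k×)². Equivalently, two nondegenerate diagonal forms of the same rank are isometric iff their determinants agree modulo squares. -/
open Matrix

namespace FiniteFieldForms

variable {k : Type*} [Field k]

/-- Every symmetric matrix over a field of characteristic not two is congruent to a diagonal one. -/
theorem exists_transpose_mul_mul_eq_diagonal (h2 : (2 : k) ≠ 0) {n : ℕ}
    {A : Matrix (Fin n) (Fin n) k} (hA : A.IsSymm) :
    ∃ (P : Matrix (Fin n) (Fin n) k) (w : Fin n → k),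
      IsUnit P.det ∧ Pᵀ * A * P = diagonal w := by
  have := invertibleOfNonzero h2
  obtain ⟨v, hv⟩ := LinearMap.BilinForm.exists_orthogonal_basis (B := Matrix.toBilin' A)
    (LinearMap.BilinForm.isSymm_iff.mp (Matrix.isSymm_toBilin'_iff_isSymm.mpr hA))
  let b := v.reindex (finCongr (Module.finrank_fin_fun k (n := n)))
  refine ⟨(Pi.basisFun k (Fin n)).toMatrix b, fun i => Matrix.toBilin' A (b i) (b i), ?_, ?_⟩
  · rw [← isUnit_iff_isUnit_det]
    have := (Pi.basisFun k (Fin n)).invertibleToMatrix b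
    exact isUnit_of_invertible _
  · have h := LinearMap.BilinForm.toMatrix_mul_basis_toMatrix (Pi.basisFun k (Fin n)) b
      (Matrix.toBilin' A)
    rw [LinearMap.BilinForm.toMatrix_basisFun, LinearMap.BilinForm.toMatrix'_toBilin'] at h
    rw [h]
    ext i j
    rw [LinearMap.BilinForm.toMatrix_apply, diagonal_apply]
    split_ifs with hij
    · rw [hij]
    · simp only [b, Module.Basis.reindex_apply]
      exact hv (fun h => hij (by simpa using h))

/-- A nondegenerate binary diagonal form over a finite field represents one. -/
theorem exists_mul_sq_add_mul_sq_eq_one [Fintype k] (hchar : ringChar k ≠ 2) {a b : k}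
    (ha : a ≠ 0) (hb : b ≠ 0) : ∃ x y : k, a * x ^ 2 + b * y ^ 2 = 1 := by
  open Polynomial in
  obtain ⟨x, y, h⟩ := FiniteField.exists_root_sum_quadratic
    (f := C a * X ^ 2) (g := C b * X ^ 2 + C 0 * X + C (-1))
    (degree_C_mul_X_pow 2 ha) (degree_quadratic hb) (FiniteField.odd_card_of_char_ne_two hchar)
  refine ⟨x, y, ?_⟩
  simp at h
  linear_combination h

theorem transpose_mul_diagonal_mul_apply {n : ℕ} (w : Fin n → k) (P : Matrix (Fin n) (Fin n) k)
    (i j : Fin n) : (Pᵀ * diagonal w * P) i j = ∑ l, P l i * w l * P l j := by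
  rw [mul_apply]
  simp only [mul_diagonal, transpose_apply]

theorem diagonal_cons_congr {n : ℕ} (a : k) {w w' : Fin n → k} {P : Matrix (Fin n) (Fin n) k}
    (h : diagonal w = Pᵀ * diagonal w' * P) :
    ∃ Q : Matrix (Fin (n + 1)) (Fin (n + 1)) k,
      diagonal (Fin.cons a w : Fin (n + 1) → k) =
        Qᵀ * diagonal (Fin.cons a w' : Fin (n + 1) → k) * Q := by
  refine ⟨of (Fin.cons (Fin.cons 1 0) fun i => Fin.cons 0 (P i)), ?_⟩
  ext i j
  refine Fin.cases ?_ (fun i => ?_) i <;> refine Fin.cases ?_ (fun j => ?_) j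
  · simp [transpose_mul_diagonal_mul_apply, Fin.sum_univ_succ]
  · simp [transpose_mul_diagonal_mul_apply, Fin.sum_univ_succ, (Fin.succ_ne_zero _).symm]
  · simp [transpose_mul_diagonal_mul_apply, Fin.sum_univ_succ]
  · have hij := congrFun₂ h i j
    rw [transpose_mul_diagonal_mul_apply] at hij
    simp [transpose_mul_diagonal_mul_apply, Fin.sum_univ_succ, ← hij, diagonal_apply]

/-- If `a x² + b y² = 1`, the form `⟨a, b, …⟩` is isometric to `⟨1, ab, …⟩`. -/
theorem diagonal_cons_one_congr {n : ℕ} {a b x y : k} (h : a * x ^ 2 + b * y ^ 2 = 1)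
    (w : Fin n → k) :
    ∃ Q : Matrix (Fin (n + 2)) (Fin (n + 2)) k,
      diagonal (Fin.cons 1 (Fin.cons (a * b) w : Fin (n + 1) → k) : Fin (n + 2) → k) =
        Qᵀ * diagonal (Fin.cons a (Fin.cons b w : Fin (n + 1) → k) : Fin (n + 2) → k) * Q := by
  refine ⟨of (Fin.cons (Fin.cons x (Fin.cons (-b * y) 0 : Fin (n + 1) → k))
    (Fin.cons (Fin.cons y (Fin.cons (a * x) 0 : Fin (n + 1) → k))
      fun i => Fin.cons 0 (Fin.cons 0 ((1 : Matrix (Fin n) (Fin n) k) i) : Fin (n + 1) → k))), ?_⟩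
  ext i j
  refine Fin.cases ?_ (fun i => Fin.cases ?_ (fun i => ?_) i) i <;>
    refine Fin.cases ?_ (fun j => Fin.cases ?_ (fun j => ?_) j) j <;>
    simp [transpose_mul_diagonal_mul_apply, Fin.sum_univ_succ, diagonal_apply, one_apply,
      (Fin.succ_ne_zero _).symm]
  · linear_combination -h
  · ring
  · ring
  · linear_combination (-a * b) * h
  · intro h1
    simp [Fin.ext_iff] at h1
  · intro h1
    simp [Fin.ext_iff] at h1
  · grind

theorem congr_symm {n : ℕ} {A B P : Matrix (Fin n) (Fin n) k} (hA : IsUnit A.det)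
    (h : A = Pᵀ * B * P) : B = P⁻¹ᵀ * A * P⁻¹ := by
  have hP : IsUnit P.det := by
    rw [h, det_mul] at hA
    exact isUnit_of_mul_isUnit_right hA
  have hPt : IsUnit Pᵀ.det := by rwa [det_transpose]
  rw [h, transpose_nonsing_inv, Matrix.mul_assoc, Matrix.mul_nonsing_inv_cancel_right _ _ hP,
    Matrix.nonsing_inv_mul_cancel_left _ _ hPt]

theorem isUnit_det_diagonal {n : ℕ} {w : Fin n → k} (hw : ∀ i, w i ≠ 0) :
    IsUnit (diagonal w).det := by
  rw [det_diagonal]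
  exact (Finset.prod_ne_zero_iff.mpr fun i _ => hw i).isUnit

/-- Nondegenerate diagonal forms over a finite field of odd characteristic are isometric as soon
as their determinants agree modulo squares. -/
theorem diagonal_congr_of_prod_eq [Fintype k] (hchar : ringChar k ≠ 2) :
    ∀ {n : ℕ} {w w' : Fin n → k}, (∀ i, w i ≠ 0) → (∀ i, w' i ≠ 0) →
      ∀ u : k, ∏ i, w i = u ^ 2 * ∏ i, w' i →
        ∃ P : Matrix (Fin n) (Fin n) k, diagonal w = Pᵀ * diagonal w' * P
  | 0, _, _, _, _, _, _ => ⟨1, Subsingleton.elim _ _⟩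
  | 1, w, w', _, _, u, h => by
    refine ⟨diagonal fun _ => u, ?_⟩
    rw [diagonal_transpose, diagonal_mul_diagonal, diagonal_mul_diagonal]
    congr 1
    ext i
    fin_cases i
    simp at h ⊢
    linear_combination h
  | n + 2, w, w', hw, hw', u, h => by
    have key : ∀ w : Fin (n + 2) → k, (∀ i, w i ≠ 0) → ∃ v : Fin (n + 1) → k,
        (∀ i, v i ≠ 0) ∧ ∏ i, v i = ∏ i, w i ∧
        ∃ Q : Matrix (Fin (n + 2)) (Fin (n + 2)) k,
          diagonal (Fin.cons 1 v : Fin (n + 2) → k) = Qᵀ * diagonal w * Q := by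
      intro w hw
      obtain ⟨x, y, hxy⟩ := exists_mul_sq_add_mul_sq_eq_one hchar (hw 0) (hw 1)
      refine ⟨Fin.cons (w 0 * w 1) fun i => w i.succ.succ, ?_, ?_, ?_⟩
      · exact Fin.cases (mul_ne_zero (hw 0) (hw 1)) fun i => hw i.succ.succ
      · simp [Fin.prod_univ_succ, mul_assoc]
      · have hw_eq : w = Fin.cons (w 0) (Fin.cons (w 1) fun i => w i.succ.succ :
            Fin (n + 1) → k) := by
          ext i
          exact Fin.cases rfl (fun i => Fin.cases rfl (fun _ => rfl) i) i
        have := diagonal_cons_one_congr hxy fun i => w i.succ.succ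
        rwa [← hw_eq] at this
    obtain ⟨v, hv, hvw, Q, hQ⟩ := key w hw
    obtain ⟨v', hv', hvw', Q', hQ'⟩ := key w' hw'
    obtain ⟨P, hP⟩ := diagonal_congr_of_prod_eq hchar hv hv' u (by rw [hvw, hvw', h])
    obtain ⟨R, hR⟩ := diagonal_cons_congr 1 hP
    have hQ₂ := congr_symm (isUnit_det_diagonal
      (Fin.cases (by simp) (by simpa using hv))) hQ
    refine ⟨Q' * R * Q⁻¹, ?_⟩
    rw [hQ₂, hR, hQ']
    simp only [transpose_mul, Matrix.mul_assoc]

end FiniteFieldForms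

open FiniteFieldForms in
/-- Over a finite field `k` of odd characteristic, a nondegenerate symmetric bilinear
form is determined up to isometry by its rank and its determinant in `kˣ/(kˣ)²`:
two nondegenerate symmetric forms of the same rank (given by Gram matrices `A`, `B`)
are isometric (congruent) iff their determinants agree modulo squares. -/
theorem stmt2 (k : Type*) [Field k] [Fintype k] (hchar : ringChar k ≠ 2) (n : ℕ)
    (A B : Matrix (Fin n) (Fin n) k) (hA : A.IsSymm) (hB : B.IsSymm)
    (hAd : IsUnit A.det) (hBd : IsUnit B.det) :
    (∃ P : Matrix (Fin n) (Fin n) k, IsUnit P.det ∧ A = Pᵀ * B * P) ↔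
      ∃ u : k, A.det = u ^ 2 * B.det := by
  constructor
  · rintro ⟨P, -, rfl⟩
    exact ⟨P.det, by rw [det_mul, det_mul, det_transpose]; ring⟩
  · rintro ⟨u, hu⟩
    have h2 : (2 : k) ≠ 0 := Ring.two_ne_zero hchar
    obtain ⟨P, w, hP, hPw⟩ := exists_transpose_mul_mul_eq_diagonal h2 hA
    obtain ⟨Q, v, hQ, hQv⟩ := exists_transpose_mul_mul_eq_diagonal h2 hB
    have hw_det : ∏ i, w i = P.det ^ 2 * A.det := by
      rw [← det_diagonal, ← hPw, det_mul, det_mul, det_transpose]; ring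
    have hv_det : ∏ i, v i = Q.det ^ 2 * B.det := by
      rw [← det_diagonal, ← hQv, det_mul, det_mul, det_transpose]; ring
    have hw : ∀ i, w i ≠ 0 := fun i => Finset.prod_ne_zero_iff.mp
      (hw_det ▸ mul_ne_zero (pow_ne_zero 2 hP.ne_zero) hAd.ne_zero) i (Finset.mem_univ i)
    have hv : ∀ i, v i ≠ 0 := fun i => Finset.prod_ne_zero_iff.mp
      (hv_det ▸ mul_ne_zero (pow_ne_zero 2 hQ.ne_zero) hBd.ne_zero) i (Finset.mem_univ i)
    obtain ⟨R, hR⟩ := diagonal_congr_of_prod_eq hchar hw hv (P.det * u / Q.det) (by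
      have := hQ.ne_zero
      rw [hw_det, hv_det, hu]
      field_simp)
    have hA_eq : A = (Q * R * P⁻¹)ᵀ * B * (Q * R * P⁻¹) := by
      rw [congr_symm (isUnit_det_diagonal hw) hPw.symm, hR, ← hQv]
      simp only [transpose_mul, Matrix.mul_assoc]
    refine ⟨Q * R * P⁻¹, ?_, hA_eq⟩
    rw [hA_eq, det_mul] at hAd
    exact isUnit_of_mul_isUnit_right hAd
end
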